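/- arXiv:2006.09076 — 3 statements merged into one kernel-verified Lean document; each statement's English description precedes it below -/
import Mathlib

section
/- Duality for multiple zeta values with double tails: let n,m be nonnegative integers and let k=(k_1,…,k_a) be a nonempty admissible index. Then ζ_{n,m}(k) = ζ_{m,n}(k†), where both series converge. -/
open scoped Classical ENNReal

noncomputable section

/-- Last value of a tuple, with default `d` for the empty tuple. -/
def lastD {c : ℕ} (d : ℕ) (f : Fin c → ℕ) : ℕ :=
  if h : 0 < c then f ⟨c - 1, Nat.sub_lt h Nat.one_pos⟩ else d

/-- The multiple zeta value with double tails
`ζ_{n,m}(k) = Σ_{n < n₁ < ⋯ < nₐ} (∏ nᵢ^(-kᵢ)) / binom(nₐ + m, m)`,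
as a sum of nonnegative terms valued in `[0,∞]`. -/
def zetaTail (n m : ℕ) (k : List ℕ) : ℝ≥0∞ :=
  ∑' f : Fin k.length → ℕ,
    Set.indicator {f : Fin k.length → ℕ | (∀ i, n < f i) ∧ StrictMono f}
      (fun f => (∏ i, ((f i : ℝ≥0∞) ^ k.get i)⁻¹) *
        ((Nat.choose (lastD n f + m) m : ℝ≥0∞))⁻¹) f

/-- The word (over the alphabet `{x, y}`, encoded with `y = true`, `x = false`)
attached to an index: `w(k) = y x^(k₁-1) y x^(k₂-1) ⋯ y x^(kₐ-1)`. -/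
def word (k : List ℕ) : List Bool :=
  k.flatMap fun ki => true :: List.replicate (ki - 1) false

/-- The index attached to a word (left inverse of `word` on words beginning with `y`). -/
def wordToIndex (w : List Bool) : List ℕ :=
  w.foldl (fun acc b => if b then acc.concat 1 else acc.dropLast.concat (acc.getLast! + 1)) []

/-- The dual index `k†` of an admissible index `k`: reverse the word of `k`
and exchange the letters `x` and `y`. -/
def dual (k : List ℕ) : List ℕ :=
  wordToIndex (((word k).reverse).map fun b => !b)

/-- The connector `n! m! / (n+m)!`. -/
def conn (p q : ℕ) : ℝ≥0∞ := ((Nat.choose (p + q) q : ℕ) : ℝ≥0∞)⁻¹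

lemma conn_symm (p q : ℕ) : conn p q = conn q p := by
  unfold conn
  rw [Nat.add_comm q p, Nat.choose_symm_add]

/-- Operator attached to a letter. -/
def opL (b : Bool) (g : ℕ → ℝ≥0∞) (n : ℕ) : ℝ≥0∞ :=
  if b then ∑' p : ℕ, (if n < p then (p : ℝ≥0∞)⁻¹ else 0) * g p else (n : ℝ≥0∞)⁻¹ * g n

/-- Operator attached to a word. -/
def ev : List Bool → (ℕ → ℝ≥0∞) → ℕ → ℝ≥0∞
  | [], g => g
  | b :: w, g => opL b (ev w g)

lemma ev_append (u v : List Bool) (g : ℕ → ℝ≥0∞) : ev (u ++ v) g = ev u (ev v g) := by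
  induction u with
  | nil => rfl
  | cons b u ih => simp [ev, ih]

lemma opL_comm (b c : Bool) (H : ℕ → ℕ → ℝ≥0∞) (n m : ℕ) :
    opL b (fun p => opL c (fun q => H p q) m) n = opL c (fun q => opL b (fun p => H p q) n) m := by
  cases b <;> cases c <;> simp only [opL, if_true, Bool.false_eq_true, if_false]
  · exact mul_left_comm _ _ _
  · rw [← ENNReal.tsum_mul_left]
    exact tsum_congr fun q => mul_left_comm _ _ _
  · rw [← ENNReal.tsum_mul_left]
    exact tsum_congr fun q => mul_left_comm _ _ _
  · simp_rw [← ENNReal.tsum_mul_left]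
    rw [ENNReal.tsum_comm]
    exact tsum_congr fun q => tsum_congr fun p => mul_left_comm _ _ _

lemma opL_ev_comm (b : Bool) (w : List Bool) (H : ℕ → ℕ → ℝ≥0∞) (n m : ℕ) :
    opL b (fun p => ev w (fun q => H p q) m) n = ev w (fun q => opL b (fun p => H p q) n) m := by
  induction w generalizing m with
  | nil => rfl
  | cons c w ih =>
    simp only [ev]
    rw [← funext ih]
    exact opL_comm b c (fun p q => ev w (fun q => H p q) q) n m

lemma tail_shift (n : ℕ) (g : ℕ → ℝ≥0∞) :
    opL true g n = ∑' i : ℕ, ((n + 1 + i : ℕ) : ℝ≥0∞)⁻¹ * g (n + 1 + i) := by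
  simp only [opL, if_true]
  rw [← Function.Injective.tsum_eq (g := fun i : ℕ => n + 1 + i) (add_right_injective (n + 1))]
  · refine tsum_congr fun i => ?_
    rw [if_pos (by omega)]
  · intro p hp
    by_cases h : n < p
    · exact ⟨p - (n + 1), by simp; omega⟩
    · simp [h] at hp

lemma conn_step (n q : ℕ) (hq : q ≠ 0) :
    ((n + 1 : ℕ) : ℝ≥0∞)⁻¹ * conn (n + 1) q + (q : ℝ≥0∞)⁻¹ * conn (n + 1) q
      = (q : ℝ≥0∞)⁻¹ * conn n q := by
  have h1 : (n + 1 + q).choose q * (n + 1) = (n + q).choose q * (n + 1 + q) := by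
    have := Nat.choose_mul_succ_eq (n + q) q
    rw [show n + q + 1 - q = n + 1 by omega] at this
    rw [show n + 1 + q = n + q + 1 by omega]
    exact this.symm
  have hA : 0 < (n + 1 + q).choose q := Nat.choose_pos (by omega)
  have hB : 0 < (n + q).choose q := Nat.choose_pos (by omega)
  unfold conn
  generalize (n + 1 + q).choose q = A at *
  generalize (n + q).choose q = B at *
  have key : ∀ a : ℕ, 0 < a → ((a : ℝ≥0∞)⁻¹ = ENNReal.ofReal ((a : ℝ)⁻¹)) := by
    intro a ha
    rw [ENNReal.ofReal_inv_of_pos (by exact_mod_cast ha), ENNReal.ofReal_natCast]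
  rw [key _ hA, key _ hB, key q (by omega), key (n + 1) (by omega)]
  rw [← ENNReal.ofReal_mul (by positivity), ← ENNReal.ofReal_mul (by positivity),
    ← ENNReal.ofReal_mul (by positivity), ← ENNReal.ofReal_add (by positivity) (by positivity)]
  congr 1
  have h1' : (A : ℝ) * (n + 1) = B * (n + 1 + q) := by exact_mod_cast h1
  have : (A : ℝ) ≠ 0 := by positivity
  have : (B : ℝ) ≠ 0 := by positivity
  have : (q : ℝ) ≠ 0 := by exact_mod_cast hq
  have : (n : ℝ) + 1 ≠ 0 := by positivity
  push_cast
  field_simp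
  linarith

lemma conn_le (p q : ℕ) (hq : q ≠ 0) : conn p q ≤ ((p : ℝ≥0∞))⁻¹ := by
  unfold conn
  apply ENNReal.inv_le_inv.2
  have : p ≤ (p + q).choose q := by
    rw [← Nat.choose_symm_add]
    obtain ⟨r, rfl⟩ := Nat.exists_eq_succ_of_ne_zero hq
    calc p ≤ (p + 1).choose p := by simp
      _ ≤ _ := Nat.choose_le_choose _ (by omega)
  exact_mod_cast this

lemma transport_true (n q : ℕ) :
    opL true (fun p => conn p q) n = (q : ℝ≥0∞)⁻¹ * conn n q := by
  rw [tail_shift]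
  rcases Nat.eq_zero_or_pos q with rfl | hq
  · simp only [conn, add_zero, Nat.choose_zero_right, Nat.cast_one, inv_one, mul_one, Nat.cast_zero,
      ENNReal.inv_zero]
    by_contra hne
    have h2 : ∀ i : ℕ, (((n + 1 + i : ℕ) : ℝ≥0∞)⁻¹) = ((((n + 1 + i : ℕ) : NNReal)⁻¹ : NNReal) : ℝ≥0∞) := by
      intro i
      rw [ENNReal.coe_inv (by positivity)]
      simp
    simp_rw [h2] at hne
    rw [← Ne, ENNReal.tsum_coe_ne_top_iff_summable] at hne
    have h3 : Summable (fun i : ℕ => (((i + (n + 1) : ℕ) : ℝ)⁻¹)) := by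
      have := NNReal.summable_coe.2 hne
      refine this.congr fun i => ?_
      push_cast
      congr 1
      ring
    exact Real.not_summable_natCast_inv ((summable_nat_add_iff (n + 1)).1 h3)
  · have hq0 : q ≠ 0 := by omega
    have hfin : ∀ N : ℕ, (∑ i ∈ Finset.range N, ((n + 1 + i : ℕ) : ℝ≥0∞)⁻¹ * conn (n + 1 + i) q)
        + (q : ℝ≥0∞)⁻¹ * conn (n + N) q = (q : ℝ≥0∞)⁻¹ * conn n q := by
      intro N
      induction N with
      | zero => simp
      | succ N ih =>
        rw [Finset.sum_range_succ, ← ih, add_assoc]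
        congr 1
        rw [← conn_step (n + N) q hq0, show n + 1 + N = n + N + 1 by omega,
          show n + (N + 1) = n + N + 1 by omega]
    have hlim : Filter.Tendsto (fun N : ℕ => (q : ℝ≥0∞)⁻¹ * conn (n + N) q) Filter.atTop (nhds 0) := by
      refine tendsto_of_tendsto_of_tendsto_of_le_of_le tendsto_const_nhds
        ENNReal.tendsto_inv_nat_nhds_zero (fun _ => zero_le) (fun N => ?_)
      calc (q : ℝ≥0∞)⁻¹ * conn (n + N) q ≤ 1 * conn (n + N) q := by
            gcongr
            rw [ENNReal.inv_le_one]
            exact_mod_cast hq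
        _ = conn (n + N) q := one_mul _
        _ ≤ ((n + N : ℕ) : ℝ≥0∞)⁻¹ := conn_le _ _ hq0
        _ ≤ (N : ℝ≥0∞)⁻¹ := by
            apply ENNReal.inv_le_inv.2
            exact_mod_cast Nat.le_add_left N n
    have h := (ENNReal.tendsto_nat_tsum
      (fun i : ℕ => ((n + 1 + i : ℕ) : ℝ≥0∞)⁻¹ * conn (n + 1 + i) q)).add hlim
    simp_rw [hfin] at h
    rw [add_zero] at h
    exact (tendsto_nhds_unique h tendsto_const_nhds)

lemma transport (b : Bool) (n q : ℕ) :
    opL b (fun p => conn p q) n = opL (!b) (fun r => conn n r) q := by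
  cases b
  · have := transport_true q n
    simp only [Bool.not_false]
    rw [show (fun r => conn n r) = fun r => conn r n from funext fun r => conn_symm n r, this,
      conn_symm q n]
    simp [opL]
  · rw [transport_true]
    simp [opL]

lemma ev_dual (w : List Bool) (n m : ℕ) :
    ev w (fun p => conn p m) n = ev (w.reverse.map fun b => !b) (fun q => conn n q) m := by
  induction w generalizing n with
  | nil => rfl
  | cons b w ih =>
    rw [List.reverse_cons, List.map_append, ev_append]
    simp only [ev, List.map_cons, List.map_nil]
    rw [funext ih, opL_ev_comm]
    congr 1
    funext q
    exact transport b n q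

lemma opL_mono (b : Bool) {g h : ℕ → ℝ≥0∞} (n : ℕ) (hn : n ≠ 0) (hgh : ∀ p, p ≠ 0 → g p ≤ h p) :
    opL b g n ≤ opL b h n := by
  cases b <;> simp only [opL, if_true, Bool.false_eq_true, if_false]
  · gcongr
    exact hgh n hn
  · refine ENNReal.tsum_le_tsum fun p => ?_
    by_cases hp : p = 0
    · simp [hp]
    · gcongr
      exact hgh p hp

lemma ev_bound (w : List Bool) (g : ℕ → ℝ≥0∞) (hg : ∀ p, p ≠ 0 → g p ≤ 2 * conn p 1) :
    ∀ p, p ≠ 0 → ev w g p ≤ 2 * conn p 1 := by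
  induction w with
  | nil => exact hg
  | cons b w ih =>
    intro p hp
    refine (opL_mono b p hp ih).trans ?_
    cases b
    · simp only [opL, Bool.false_eq_true, if_false]
      calc (p : ℝ≥0∞)⁻¹ * (2 * conn p 1) ≤ 1 * (2 * conn p 1) := by
            gcongr
            rw [ENNReal.inv_le_one]
            exact_mod_cast Nat.one_le_iff_ne_zero.2 hp
        _ = _ := one_mul _
    · have := transport_true p 1
      simp only [opL, if_true] at this ⊢
      simp_rw [mul_left_comm _ (2 : ℝ≥0∞)]
      rw [ENNReal.tsum_mul_left, this]
      simp

lemma inv_le_conn (p : ℕ) (hp : p ≠ 0) : (p : ℝ≥0∞)⁻¹ ≤ 2 * conn p 1 := by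
  have h := conn_symm p 1
  unfold conn at *
  rw [Nat.choose_one_right]
  have e : (2 : ℝ≥0∞) = ((2 : ℝ≥0∞)⁻¹)⁻¹ := (inv_inv _).symm
  rw [e, ← ENNReal.mul_inv (by simp) (by simp)]
  apply ENNReal.inv_le_inv.2
  have h2 : ((p + 1 : ℕ) : ℝ≥0∞) ≤ 2 * p := by
    exact_mod_cast (by omega : p + 1 ≤ 2 * p)
  calc (2 : ℝ≥0∞)⁻¹ * ((p + 1 : ℕ) : ℝ≥0∞) ≤ 2⁻¹ * (2 * p) := by gcongr
    _ = p := by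
      rw [← mul_assoc, ENNReal.inv_mul_cancel (by simp) (by simp), one_mul]

lemma conn_le_one (p q : ℕ) : conn p q ≤ 1 := by
  unfold conn
  rw [ENNReal.inv_le_one]
  exact_mod_cast Nat.choose_pos (by omega)

lemma ev_finite (w : List Bool) (n m : ℕ) :
    ev (true :: (w ++ [false])) (fun p => conn p m) n ≠ ∞ := by
  have hb : ∀ p, p ≠ 0 → ev (w ++ [false]) (fun p => conn p m) p ≤ 2 * conn p 1 := by
    rw [ev_append]
    refine ev_bound w _ fun p hp => ?_
    simp only [ev, opL, Bool.false_eq_true, if_false]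
    calc (p : ℝ≥0∞)⁻¹ * conn p m ≤ (p : ℝ≥0∞)⁻¹ * 1 := by
          gcongr
          exact conn_le_one _ _
      _ ≤ _ := by rw [mul_one]; exact inv_le_conn p hp
  have h2 : ev (true :: (w ++ [false])) (fun p => conn p m) n ≤ 2 * conn n 1 := by
    have := transport_true n 1
    simp only [ev, opL, if_true] at this ⊢
    calc _ ≤ ∑' p : ℕ, (if n < p then (p : ℝ≥0∞)⁻¹ else 0) * (2 * conn p 1) := by
          refine ENNReal.tsum_le_tsum fun p => ?_
          by_cases hp : p = 0
          · simp [hp]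
          · gcongr
            exact hb p hp
      _ = _ := by
          simp_rw [mul_left_comm _ (2 : ℝ≥0∞)]
          rw [ENNReal.tsum_mul_left, this]
          simp
  refine ne_top_of_le_ne_top ?_ h2
  exact ENNReal.mul_ne_top (by simp) (ne_top_of_le_ne_top ENNReal.one_ne_top (conn_le_one _ _))

lemma ev_replicate (r : ℕ) (g : ℕ → ℝ≥0∞) (p : ℕ) :
    ev (List.replicate r false) g p = ((p : ℝ≥0∞)⁻¹) ^ r * g p := by
  induction r with
  | zero => simp [ev]
  | succ r ih =>
    rw [List.replicate_succ]
    simp only [ev, opL, Bool.false_eq_true, if_false]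
    rw [ih, pow_succ']
    ring

lemma lastD_cons {c : ℕ} (d p : ℕ) (f : Fin c → ℕ) :
    lastD d (Fin.cons p f : Fin (c + 1) → ℕ) = lastD p f := by
  unfold lastD
  rw [dif_pos (Nat.succ_pos c)]
  cases c with
  | zero => simp
  | succ c =>
    rw [dif_pos (Nat.succ_pos c)]
    exact Fin.cons_succ (α := fun _ => ℕ) p f ⟨c, _⟩

lemma zetaTail_cons (n m a : ℕ) (k : List ℕ) :
    zetaTail n m (a :: k) =
      ∑' p : ℕ, (if n < p then ((p : ℝ≥0∞)⁻¹) ^ a else 0) * zetaTail p m k := by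
  unfold zetaTail
  change (∑' f : Fin (k.length + 1) → ℕ,
    Set.indicator {f : Fin (k.length + 1) → ℕ | (∀ i, n < f i) ∧ StrictMono f}
      (fun f => (∏ i : Fin (k.length + 1), ((f i : ℝ≥0∞) ^ (a :: k).get i)⁻¹) *
        ((Nat.choose (lastD n f + m) m : ℝ≥0∞))⁻¹) f) = _
  rw [← (Fin.consEquiv (n := k.length) (fun _ => ℕ)).tsum_eq, ENNReal.tsum_prod']
  refine tsum_congr fun p => ?_
  rw [← ENNReal.tsum_mul_left]
  refine tsum_congr fun f => ?_
  simp only [Fin.consEquiv, Equiv.coe_fn_mk, Set.indicator_apply, Set.mem_ofPred_eq]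
  have hiff : ((∀ i, n < (Fin.cons p f : Fin (k.length + 1) → ℕ) i) ∧
      StrictMono (Fin.cons p f : Fin (k.length + 1) → ℕ)) ↔
      n < p ∧ ((∀ i, p < f i) ∧ StrictMono f) := by
    rw [Fin.strictMono_cons]
    constructor
    · rintro ⟨h1, h2⟩
      exact ⟨by simpa using h1 0, h2⟩
    · rintro ⟨h1, h2⟩
      refine ⟨fun i => ?_, h2⟩
      refine Fin.cases ?_ (fun j => ?_) i
      · simpa using h1
      · simpa using h1.trans (h2.1 j)
  have hl := lastD_cons n p f
  have hprod : (∏ i : Fin (k.length + 1), (((Fin.cons p f : Fin (k.length + 1) → ℕ) i : ℝ≥0∞) ^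
      (a :: k).get i)⁻¹) = ((p : ℝ≥0∞)⁻¹) ^ a * ∏ i, ((f i : ℝ≥0∞) ^ k.get i)⁻¹ := by
    rw [Fin.prod_univ_succ]
    simp [ENNReal.inv_pow]
  by_cases h1 : n < p
  · by_cases h2 : (∀ i, p < f i) ∧ StrictMono f
    · rw [if_pos (hiff.2 ⟨h1, h2⟩), if_pos h1, if_pos h2, hl, hprod, mul_assoc]
    · rw [if_neg (fun h => h2 (hiff.1 h).2), if_neg h2, mul_zero]
  · rw [if_neg (fun h => h1 (hiff.1 h).1), if_neg h1, zero_mul]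

lemma zetaTail_eq_ev (m : ℕ) (k : List ℕ) (hk1 : ∀ i ∈ k, 1 ≤ i) (n : ℕ) :
    zetaTail n m k = ev (word k) (fun p => conn p m) n := by
  induction k generalizing n with
  | nil =>
    simp only [zetaTail, word, List.flatMap_nil, ev, conn]
    change (∑' f : Fin 0 → ℕ, Set.indicator {f : Fin 0 → ℕ | (∀ i, n < f i) ∧ StrictMono f}
      (fun f => (∏ i : Fin 0, ((f i : ℝ≥0∞) ^ ([] : List ℕ).get i)⁻¹) *
        ((Nat.choose (lastD n f + m) m : ℝ≥0∞))⁻¹) f) = _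
    rw [tsum_eq_single (default : Fin 0 → ℕ) (fun f hf => absurd (Subsingleton.elim _ _) hf)]
    have hs : StrictMono (default : Fin 0 → ℕ) := fun i => i.elim0
    rw [Set.indicator_apply, if_pos ⟨fun i => i.elim0, hs⟩]
    simp [lastD]
  | cons a k ih =>
    rw [zetaTail_cons]
    have ha : 1 ≤ a := hk1 a (by simp)
    have hw : word (a :: k) = true :: (List.replicate (a - 1) false ++ word k) := by
      simp [word]
    rw [hw]
    simp only [ev, opL, if_true]
    refine tsum_congr fun p => ?_
    rw [ev_append, ev_replicate, ih (fun i hi => hk1 i (by simp [hi]))]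
    split_ifs
    · rw [← mul_assoc, ← pow_succ', Nat.sub_add_cancel ha]
    · simp

lemma word_append (k l : List ℕ) : word (k ++ l) = word k ++ word l := by
  simp [word]

lemma foldl_word (w : List Bool) (acc : List ℕ) (h0 : acc ≠ []) (h1 : ∀ i ∈ acc, 1 ≤ i) :
    word (w.foldl (fun acc b => if b then acc.concat 1
        else acc.dropLast.concat (acc.getLast! + 1)) acc) = word acc ++ w ∧
    ∀ i ∈ (w.foldl (fun acc b => if b then acc.concat 1
        else acc.dropLast.concat (acc.getLast! + 1)) acc), 1 ≤ i := by
  induction w generalizing acc with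
  | nil => simpa using h1
  | cons b w ih =>
    rw [List.foldl_cons]
    cases b
    · simp only [Bool.false_eq_true, if_false, List.concat_eq_append]
      obtain ⟨l, x, rfl⟩ : ∃ l x, acc = l ++ [x] :=
        ⟨acc.dropLast, acc.getLast h0, (List.dropLast_append_getLast h0).symm⟩
      have hx : 1 ≤ x := h1 x (by simp)
      have hlast : (l ++ [x]).getLast! = x := by
        rw [List.getLast!_eq_getLast?_getD]; simp
      rw [hlast, List.dropLast_concat]
      obtain ⟨e1, e2⟩ := ih (l ++ [x + 1]) (by simp) (by
        intro i hi
        rcases List.mem_append.1 hi with h | h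
        · exact h1 i (by simp [h])
        · simp at h; omega)
      simp only [List.concat_eq_append] at e1 e2
      refine ⟨?_, e2⟩
      rw [e1, word_append, word_append]
      obtain ⟨y, rfl⟩ : ∃ y, x = y + 1 := ⟨x - 1, by omega⟩
      simp [word, List.replicate_succ']
    · simp only [if_true, List.concat_eq_append]
      obtain ⟨e1, e2⟩ := ih (acc ++ [1]) (by simp) (by
        intro i hi
        rcases List.mem_append.1 hi with h | h
        · exact h1 i h
        · simp at h; omega)
      simp only [List.concat_eq_append] at e1 e2
      refine ⟨?_, e2⟩
      rw [e1, word_append]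
      simp [word]

lemma wordToIndex_spec (w : List Bool) :
    word (wordToIndex (true :: w)) = true :: w ∧ ∀ i ∈ wordToIndex (true :: w), 1 ≤ i := by
  have h := foldl_word w [1] (by simp) (by simp)
  unfold wordToIndex
  rw [List.foldl_cons]
  simpa [word] using h

lemma word_shape (k : List ℕ) (hk : k ≠ []) (hka : 2 ≤ k.getLast hk) :
    ∃ u, word k = true :: (u ++ [false]) := by
  have h1 : word k = word k.dropLast ++ word [k.getLast hk] := by
    rw [← word_append, List.dropLast_append_getLast]
  obtain ⟨y, hy⟩ : ∃ y, k.getLast hk = y + 2 := ⟨k.getLast hk - 2, by omega⟩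
  rw [hy] at h1
  have h2 : word [y + 2] = true :: (List.replicate y false ++ [false]) := by
    simp [word, List.replicate_succ']
  rw [h1, h2]
  cases hd : k.dropLast with
  | nil => exact ⟨List.replicate y false, by simp [word]⟩
  | cons a l =>
    refine ⟨List.replicate (a - 1) false ++ word l ++ true :: List.replicate y false, ?_⟩
    simp [word]

/-- **Duality for multiple zeta values with double tails.**
For nonnegative integers `n, m` and a nonempty admissible index `k`,
`ζ_{n,m}(k) = ζ_{m,n}(k†)`, and both (equal) series converge. -/
theorem duality_double_tails (n m : ℕ) (k : List ℕ)
    (hk : k ≠ []) (hk1 : ∀ i ∈ k, 1 ≤ i) (hka : 2 ≤ k.getLast hk) :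
    zetaTail n m k = zetaTail m n (dual k) ∧ zetaTail n m k ≠ ∞ := by
  obtain ⟨u, hu⟩ := word_shape k hk hka
  have hrev : ((word k).reverse.map fun b => !b) =
      true :: ((u.reverse.map fun b => !b) ++ [false]) := by
    rw [hu]; simp
  obtain ⟨s1, s2⟩ := wordToIndex_spec ((u.reverse.map fun b => !b) ++ [false])
  rw [← hrev] at s1 s2
  constructor
  · rw [zetaTail_eq_ev m k hk1, ev_dual, zetaTail_eq_ev n (dual k) s2]
    unfold dual
    rw [s1]
    congr 1
    funext q
    exact conn_symm n q
  · rw [zetaTail_eq_ev m k hk1, hu]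
    exact ev_finite u n m
end
end

section
/- Cyclic sum formula: let k=(k_1,…,k_a) be a nonempty index (a≥1, all k_i≥1) with at least one entry ≥2. For 0≤t≤a−1 write σ^t k = (k_{t+1},…,k_a,k_1,…,k_t) for the t-fold cyclic shift. Then Σ_{t=0}^{a−1} ζ((σ^t k)_↑) = Σ_{t=0}^{a−1} Σ_{j=0}^{(σ^t k)_a − 2} ζ( j+1, (σ^t k)_1, …, (σ^t k)_{a−1}, (σ^t k)_a − j ), where (σ^t k)_i denotes the i-th entry of σ^t k and inner sums with (σ^t k)_a = 1 are empty; all indices appearing are admissible, so all multiple zeta values converge. (Summing over all a cyclic shifts counts each member of the cyclic equivalence class of k with equal multiplicity on both sides, so this is equivalent to the sum over the cyclic equivalence class.) -/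
open scoped Classical

noncomputable section

/-- Multiple zeta value of an index `k = (k₁, …, kₐ)`:
`ζ(k) = Σ_{0 < n₁ < ⋯ < nₐ} ∏ nᵢ^(-kᵢ)`, as a `tsum` of reals. -/
def mzv (k : List ℕ) : ℝ :=
  ∑' n : Fin k.length → ℕ,
    Set.indicator {n : Fin k.length → ℕ | (∀ i, 0 < n i) ∧ StrictMono n}
      (fun n => ∏ i, ((n i : ℝ) ^ k.get i)⁻¹) n

/-- `k_↑`: increase the last entry of an index by `1` (`∅_↑ = ∅`). -/
def upLast : List ℕ → List ℕ
  | [] => []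
  | k => k.dropLast ++ [k.getLast! + 1]

/-- chain sums: `∑_{m < n₁ < ⋯ < n_b} ∏ nᵢ^(-lᵢ) f(n_b)` -/
def chn : List ℕ → ℕ → (ℕ → ENNReal) → ENNReal
  | [], m, f => f m
  | k :: l, m, f => ∑' n : ℕ, if m < n then ((n : ENNReal) ^ k)⁻¹ * chn l n f else 0

/-- the function `n ↦ 1/(n-m)` -/
def dif (m n : ℕ) : ENNReal := ((n - m : ℕ) : ENNReal)⁻¹

def TT (w : List ℕ) : ENNReal := ∑' m : ℕ, chn w m (dif m)

def ZZ (w : List ℕ) : ENNReal := chn w 0 (fun _ => 1)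

/-- `∑_{m>0} m^{-j} ∑ ... n^{-c} / (n-m)` -/
def SS (j : ℕ) (l : List ℕ) (c : ℕ) : ENNReal :=
  ∑' m : ℕ, if 0 < m then ((m : ENNReal) ^ j)⁻¹ * chn (l ++ [c]) m (dif m) else 0

theorem chn_mono (l : List ℕ) : ∀ (m : ℕ) (f g : ℕ → ENNReal),
    (∀ n, m ≤ n → f n ≤ g n) → chn l m f ≤ chn l m g := by
  induction l with
  | nil => intro m f g h; exact h m le_rfl
  | cons k l ih =>
    intro m f g h
    refine ENNReal.tsum_le_tsum fun n => ?_
    split_ifs with hn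
    · gcongr
      exact ih _ _ _ fun x hx => h x (by omega)
    · exact le_rfl

theorem chn_congr (l : List ℕ) (m : ℕ) (f g : ℕ → ENNReal)
    (h : ∀ n, m ≤ n → f n = g n) : chn l m f = chn l m g :=
  le_antisymm (chn_mono l m f g fun n hn => (h n hn).le)
    (chn_mono l m g f fun n hn => (h n hn).ge)

theorem chn_append (l l' : List ℕ) : ∀ (m : ℕ) (f : ℕ → ENNReal),
    chn (l ++ l') m f = chn l m (fun x => chn l' x f) := by
  induction l with
  | nil => intro m f; rfl
  | cons k l ih => intro m f; simp [chn, ih]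

theorem chn_add (l : List ℕ) : ∀ (m : ℕ) (f g : ℕ → ENNReal),
    chn l m (fun x => f x + g x) = chn l m f + chn l m g := by
  induction l with
  | nil => intro m f g; rfl
  | cons k l ih =>
    intro m f g
    simp only [chn, ih]
    rw [← ENNReal.tsum_add]
    refine tsum_congr fun n => ?_
    split_ifs <;> simp [mul_add]

theorem chn_zero (l : List ℕ) : ∀ (m : ℕ), chn l m (fun _ => 0) = 0 := by
  induction l with
  | nil => intro m; rfl
  | cons k l ih => intro m; simp [chn, ih]

theorem chn_mul (l : List ℕ) (a : ENNReal) : ∀ (m : ℕ) (f : ℕ → ENNReal),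
    chn l m (fun x => a * f x) = a * chn l m f := by
  induction l with
  | nil => intro m f; rfl
  | cons k l ih =>
    intro m f
    simp only [chn, ih]
    rw [← ENNReal.tsum_mul_left]
    refine tsum_congr fun n => ?_
    split_ifs
    · ring
    · simp

theorem chn_sum {ι : Type*} (l : List ℕ) (s : Finset ι) (m : ℕ) (f : ι → ℕ → ENNReal) :
    chn l m (fun x => ∑ i ∈ s, f i x) = ∑ i ∈ s, chn l m (f i) := by
  classical
  induction s using Finset.induction_on with
  | empty => simp [chn_zero]
  | insert a s ha ih => simp only [Finset.sum_insert ha, chn_add, ih]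

/-- telescoping -/
theorem tele (g : ℕ → ℝ) (m : ℕ) (hg : ∀ n, m ≤ n → g (n + 1) ≤ g n)
    (h0 : Filter.Tendsto g Filter.atTop (nhds 0)) :
    (∑' n : ℕ, if m < n then ENNReal.ofReal (g (n - 1) - g n) else 0) = ENNReal.ofReal (g m) := by
  have hs : HasSum (fun i => g (m + i) - g (m + i + 1)) (g m) := by
    rw [hasSum_iff_tendsto_nat_of_nonneg]
    · have : ∀ N, ∑ i ∈ Finset.range N, (g (m + i) - g (m + i + 1)) = g m - g (m + N) := by
        intro N
        exact Finset.sum_range_sub' (fun i => g (m + i)) N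
      simp only [this]
      have h1 : Filter.Tendsto (fun N => g (m + N)) Filter.atTop (nhds 0) := by
        simpa [add_comm] using (Filter.tendsto_add_atTop_iff_nat m).2 h0
      simpa using h1.const_sub (g m)
    · intro i
      have := hg (m + i) (by omega)
      linarith
  have h1 : (∑' n : ℕ, if m < n then ENNReal.ofReal (g (n - 1) - g n) else 0)
      = ∑' i : ℕ, ENNReal.ofReal (g (m + i) - g (m + i + 1)) := by
    rw [← ENNReal.summable.sum_add_tsum_nat_add' (k := m + 1)]
    rw [Finset.sum_eq_zero, zero_add]
    · refine tsum_congr fun i => ?_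
      rw [if_pos (by omega)]
      congr 3 <;> omega
    · intro i hi
      rw [if_neg]
      have := Finset.mem_range.1 hi
      omega
  rw [h1, ← ENNReal.ofReal_tsum_of_nonneg _ hs.summable, hs.tsum_eq]
  intro i
  have := hg (m + i) (by omega)
  linarith

theorem inv_ofReal (n : ℕ) (hn : 0 < n) : (n : ENNReal)⁻¹ = ENNReal.ofReal ((n : ℝ)⁻¹) := by
  rw [ENNReal.ofReal_inv_of_pos (by positivity), ENNReal.ofReal_natCast]

theorem dif_ofReal (m n : ℕ) (hn : m < n) : dif m n = ENNReal.ofReal (((n : ℝ) - m)⁻¹) := by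
  rw [dif, inv_ofReal _ (by omega), Nat.cast_sub hn.le]

theorem pow_inv_succ (n k : ℕ) : ((n : ENNReal) ^ (k + 1))⁻¹ = ((n : ENNReal) ^ k)⁻¹ * (n : ENNReal)⁻¹ := by
  rw [ENNReal.inv_pow, ENNReal.inv_pow, pow_succ]

theorem tsum_zero_add_ennreal (f : ℕ → ENNReal) : ∑' n, f n = f 0 + ∑' n, f (n + 1) :=
  tsum_eq_zero_add' ENNReal.summable

theorem TT_start (l : List ℕ) (c : ℕ) : TT (l ++ [c]) = SS 0 l c + ZZ (l ++ [c + 1]) := by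
  have h0 : chn (l ++ [c]) 0 (dif 0) = ZZ (l ++ [c + 1]) := by
    rw [ZZ, chn_append, chn_append]
    congr 1
    ext x
    simp only [chn]
    refine tsum_congr fun n => ?_
    split_ifs
    · rw [pow_inv_succ, mul_one]; rfl
    · rfl
  rw [TT, SS, ← h0, tsum_zero_add_ennreal (fun m => chn (l ++ [c]) m (dif m)), add_comm,
    tsum_zero_add_ennreal (fun m => if 0 < m then _ else _)]
  simp

theorem SS_step (j : ℕ) (l : List ℕ) (c : ℕ) :
    SS j l (c + 1) + ZZ ((j + 1) :: (l ++ [c + 1])) = SS (j + 1) l c := by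
  rw [SS, SS, ZZ, chn, ← ENNReal.tsum_add]
  refine tsum_congr fun m => ?_
  split_ifs with hm
  · rw [chn_append, chn_append, chn_append, ← chn_mul, ← chn_mul, ← chn_mul, ← chn_add]
    refine chn_congr _ _ _ _ fun x hx => ?_
    simp only [chn]
    rw [← ENNReal.tsum_mul_left, ← ENNReal.tsum_mul_left, ← ENNReal.tsum_mul_left,
      ← ENNReal.tsum_add]
    refine tsum_congr fun n => ?_
    split_ifs with hn
    · have key : (n : ENNReal)⁻¹ * dif m n + (m : ENNReal)⁻¹ * (n : ENNReal)⁻¹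
          = (m : ENNReal)⁻¹ * dif m n := by
        have hmr : (0 : ℝ) < m := by exact_mod_cast hm
        have hnr : (0 : ℝ) < n := by exact_mod_cast (by omega : 0 < n)
        have hd : (0 : ℝ) < (n : ℝ) - m := by
          have : (m : ℝ) < n := by exact_mod_cast (by omega : m < n)
          linarith
        rw [dif_ofReal _ _ (by omega), inv_ofReal n (by omega), inv_ofReal m hm,
          ← ENNReal.ofReal_mul (by positivity), ← ENNReal.ofReal_mul (by positivity),
          ← ENNReal.ofReal_mul (by positivity), ← ENNReal.ofReal_add (by positivity) (by positivity)]
        congr 1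
        field_simp
        ring
      rw [pow_inv_succ, pow_inv_succ]
      calc _ = (((m : ENNReal) ^ j)⁻¹ * ((n : ENNReal) ^ c)⁻¹) *
            ((n : ENNReal)⁻¹ * dif m n + (m : ENNReal)⁻¹ * (n : ENNReal)⁻¹) := by ring
        _ = _ := by rw [key]; ring
    · simp
  · simp

theorem SS_iter (l : List ℕ) (c : ℕ) : ∀ J, J ≤ c →
    SS 0 l (c + 1) + ∑ j ∈ Finset.range J, ZZ ((j + 1) :: (l ++ [c + 1 - j])) = SS J l (c + 1 - J) := by
  intro J
  induction J with
  | zero => intro; simp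
  | succ J ih =>
    intro h
    rw [Finset.sum_range_succ, ← add_assoc, ih (by omega)]
    have e1 : c + 1 - J = (c - J) + 1 := by omega
    have e2 : c + 1 - (J + 1) = c - J := by omega
    rw [e1, e2, SS_step]

theorem inner_tele (m x : ℕ) (hm : 0 < m) (hx : m ≤ x) :
    (∑' n : ℕ, if x < n then (n : ENNReal)⁻¹ * dif m n else 0)
      = (m : ENNReal)⁻¹ * ∑ p ∈ Finset.range m, dif p x := by
  have hmr : (0 : ℝ) < m := by exact_mod_cast hm
  set g : ℕ → ℝ := fun n => (m : ℝ)⁻¹ * ∑ p ∈ Finset.range m, ((n : ℝ) - p)⁻¹ with hg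
  have hdiff : ∀ n, x ≤ n → g n - g (n + 1) = ((n + 1 : ℕ) : ℝ)⁻¹ * (((n + 1 : ℕ) : ℝ) - m)⁻¹ := by
    intro n hn
    have hsum : ∀ M, M ≤ m → ∑ p ∈ Finset.range M, ((n : ℝ) - p)⁻¹ - ∑ p ∈ Finset.range M, (((n + 1 : ℕ) : ℝ) - p)⁻¹
        = (((n + 1 : ℕ) : ℝ) - M)⁻¹ - ((n + 1 : ℕ) : ℝ)⁻¹ := by
      intro M hM
      rw [← Finset.sum_sub_distrib]
      have := Finset.sum_range_sub (fun p : ℕ => (((n + 1 : ℕ) : ℝ) - p)⁻¹) M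
      simp only [Nat.cast_zero, sub_zero] at this
      rw [← this]
      refine Finset.sum_congr rfl fun p _ => ?_
      congr 2
      push_cast; ring
    simp only [hg]
    rw [← mul_sub, hsum m le_rfl]
    have h2 : (0 : ℝ) < ((n + 1 : ℕ) : ℝ) - m := by
      have : (m : ℝ) < ((n + 1 : ℕ) : ℝ) := by exact_mod_cast (by omega : m < n + 1)
      linarith
    have h3 : (0 : ℝ) < ((n + 1 : ℕ) : ℝ) := by positivity
    field_simp
    ring
  have hpos : ∀ n, x ≤ n → (0 : ℝ) ≤ ((n + 1 : ℕ) : ℝ)⁻¹ * (((n + 1 : ℕ) : ℝ) - m)⁻¹ := by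
    intro n hn
    have h2 : (0 : ℝ) < ((n + 1 : ℕ) : ℝ) - m := by
      have : (m : ℝ) < ((n + 1 : ℕ) : ℝ) := by exact_mod_cast (by omega : m < n + 1)
      linarith
    positivity
  have h := tele g x (fun n hn => by linarith [hdiff n hn, hpos n hn]) (by
    have : Filter.Tendsto g Filter.atTop (nhds ((m : ℝ)⁻¹ * ∑ p ∈ Finset.range m, 0)) := by
      refine Filter.Tendsto.const_mul _ (tendsto_finsetSum _ fun p _ => ?_)
      refine tendsto_inv_atTop_zero.comp ?_
      exact Filter.tendsto_atTop_add_const_right _ _ tendsto_natCast_atTop_atTop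
    simpa using this)
  have e1 : (∑' n : ℕ, if x < n then (n : ENNReal)⁻¹ * dif m n else 0)
      = ∑' n : ℕ, if x < n then ENNReal.ofReal (g (n - 1) - g n) else 0 := by
    refine tsum_congr fun n => ?_
    split_ifs with hn
    · obtain ⟨n, rfl⟩ : ∃ q, n = q + 1 := ⟨n - 1, by omega⟩
      rw [Nat.add_sub_cancel, hdiff n (by omega), ENNReal.ofReal_mul (by positivity),
        inv_ofReal _ (by omega), dif_ofReal _ _ (by omega)]
    · rfl
  rw [e1, h]
  simp only [hg]
  rw [ENNReal.ofReal_mul (by positivity), ← inv_ofReal _ hm, ENNReal.ofReal_sum_of_nonneg]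
  · congr 1
    refine Finset.sum_congr rfl fun p hp => ?_
    rw [dif_ofReal]
    have := Finset.mem_range.1 hp
    omega
  · intro p hp
    have := Finset.mem_range.1 hp
    have : (p : ℝ) < x := by exact_mod_cast (by omega : p < x)
    have : (0 : ℝ) < x - p := by linarith
    positivity

/-- swapping the sum over the smallest variable inside -/
theorem TT_cons (c : ℕ) (l : List ℕ) : TT (c :: l) =
    ∑' m : ℕ, if 0 < m then ((m : ENNReal) ^ c)⁻¹ * chn l m (fun x => ∑ p ∈ Finset.range m, dif p x) else 0 := by
  simp only [TT, chn]
  rw [ENNReal.tsum_comm]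
  refine tsum_congr fun m => ?_
  split_ifs with hm
  · rw [chn_sum, Finset.mul_sum, tsum_eq_sum (s := Finset.range m)]
    · refine Finset.sum_congr rfl fun p hp => ?_
      rw [if_pos (Finset.mem_range.1 hp)]
    · intro p hp
      rw [if_neg (by simpa using hp)]
  · simp only [ENNReal.tsum_eq_zero]
    intro p
    rw [if_neg (by omega)]

theorem SS_end (l : List ℕ) (c : ℕ) : SS c l 1 = TT ((c + 1) :: l) := by
  rw [TT_cons, SS]
  refine tsum_congr fun m => ?_
  split_ifs with hm
  · rw [pow_inv_succ, mul_assoc]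
    congr 1
    rw [← chn_mul, chn_append]
    refine chn_congr _ _ _ _ fun x hx => ?_
    rw [← inner_tele m x hm hx]
    simp [chn]
  · rfl

theorem main_step (l : List ℕ) (c : ℕ) (hc : 1 ≤ c) :
    TT (l ++ [c]) + ∑ j ∈ Finset.range (c - 1), ZZ ((j + 1) :: (l ++ [c - j]))
      = TT (c :: l) + ZZ (l ++ [c + 1]) := by
  obtain ⟨c, rfl⟩ : ∃ d, c = d + 1 := ⟨c - 1, by omega⟩
  have := SS_iter l c c le_rfl
  rw [TT_start, ← SS_end, add_right_comm]
  simp only [Nat.add_sub_cancel]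
  rw [this]
  congr 2
  omega

/-- comparison function -/
def gg (n : ℕ) : ℝ := if n = 0 then 3 else 2 * (√n)⁻¹

theorem gg_diff (n : ℕ) : ((n + 1 : ℕ) : ℝ)⁻¹ * (√((n + 1 : ℕ) : ℝ))⁻¹ ≤ gg n - gg (n + 1) := by
  rcases Nat.eq_zero_or_pos n with rfl | hn
  · norm_num [gg]
  · have h1 : (0 : ℝ) < n := by exact_mod_cast hn
    simp only [gg, if_neg hn.ne', if_neg (Nat.succ_ne_zero n)]
    push_cast
    set a := √(n : ℝ) with ha
    set b := √((n : ℝ) + 1) with hb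
    have ha0 : 0 < a := by positivity
    have hb0 : 0 < b := by positivity
    have ha2 : a ^ 2 = n := Real.sq_sqrt h1.le
    have hb2 : b ^ 2 = (n : ℝ) + 1 := Real.sq_sqrt (by positivity)
    rw [← hb2]
    have hab : a ≤ b := Real.sqrt_le_sqrt (by linarith)
    have h3 : (b - a) * (b + a) = 1 := by nlinarith
    have h4 : b - a ≥ 1 / (2 * b) := by
      rw [ge_iff_le, div_le_iff₀ (by positivity)]
      nlinarith
    have e : 2 * a⁻¹ - 2 * b⁻¹ = 2 * (b - a) / (a * b) := by field_simp
    rw [e, le_div_iff₀ (by positivity)]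
    have h5 : (b ^ 2)⁻¹ * b⁻¹ * (a * b) = a / b ^ 2 := by field_simp
    rw [h5, div_le_iff₀ (by positivity)]
    have h6 : 1 ≤ 2 * (b - a) * b := by
      rw [ge_iff_le, div_le_iff₀ (by positivity)] at h4
      linarith
    nlinarith

theorem gg_tendsto : Filter.Tendsto gg Filter.atTop (nhds 0) := by
  have h : Filter.Tendsto (fun n : ℕ => 2 * (√(n : ℝ))⁻¹) Filter.atTop (nhds (2 * 0)) :=
    Filter.Tendsto.const_mul _ (tendsto_inv_atTop_zero.comp
      (Real.tendsto_sqrt_atTop.comp tendsto_natCast_atTop_atTop))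
  rw [mul_zero] at h
  refine h.congr' ?_
  filter_upwards [Filter.eventually_gt_atTop 0] with n hn
  simp [gg, hn.ne']

theorem gg_sum (m : ℕ) : (∑' n : ℕ, if m < n then (n : ENNReal)⁻¹ * ENNReal.ofReal ((√(n : ℝ))⁻¹) else 0)
    ≤ ENNReal.ofReal (gg m) := by
  rw [← tele gg m (fun n _ => by
    have := gg_diff n
    have : (0 : ℝ) ≤ ((n + 1 : ℕ) : ℝ)⁻¹ * (√((n + 1 : ℕ) : ℝ))⁻¹ := by positivity
    linarith) gg_tendsto]
  refine ENNReal.tsum_le_tsum fun n => ?_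
  split_ifs with hn
  · obtain ⟨n, rfl⟩ : ∃ q, n = q + 1 := ⟨n - 1, by omega⟩
    rw [inv_ofReal _ (by omega), ← ENNReal.ofReal_mul (by positivity)]
    exact ENNReal.ofReal_le_ofReal (gg_diff n)
  · exact le_rfl

theorem pow_inv_le (n k d : ℕ) (hn : 0 < n) (h : d ≤ k) : ((n : ENNReal) ^ k)⁻¹ ≤ ((n : ENNReal) ^ d)⁻¹ := by
  rw [ENNReal.inv_le_inv]
  exact pow_le_pow_right₀ (by exact_mod_cast hn) h

theorem chn_bound (l : List ℕ) (c : ℕ) (hl : ∀ i ∈ l, 1 ≤ i) (hc : 2 ≤ c) :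
    ∃ K : ENNReal, K ≠ ⊤ ∧ ∀ m, chn (l ++ [c]) m (fun n => ENNReal.ofReal (√(n : ℝ)))
      ≤ K * ENNReal.ofReal (gg m) := by
  induction l with
  | nil =>
    refine ⟨1, by simp, fun m => ?_⟩
    rw [one_mul]
    refine le_trans ?_ (gg_sum m)
    simp only [List.nil_append, chn]
    refine ENNReal.tsum_le_tsum fun n => ?_
    split_ifs with hn
    · refine (mul_le_mul_left (pow_inv_le n c 2 (by omega) hc) _).trans ?_
      rw [pow_inv_succ, pow_one, mul_assoc]
      gcongr
      rw [inv_ofReal _ (by omega), ← ENNReal.ofReal_mul (by positivity)]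
      apply ENNReal.ofReal_le_ofReal
      have : (0 : ℝ) < n := by exact_mod_cast (by omega : 0 < n)
      have h2 : √(n : ℝ) ^ 2 = n := Real.sq_sqrt this.le
      have h3 : 0 < √(n : ℝ) := by positivity
      apply le_of_eq
      field_simp
      linarith
    · exact le_rfl
  | cons k l ih =>
    obtain ⟨K, hK, h⟩ := ih fun i hi => hl i (by simp [hi])
    refine ⟨K * 2, ENNReal.mul_ne_top hK (by simp), fun m => ?_⟩
    refine le_trans ?_ (mul_le_mul_right (gg_sum m) _)
    rw [List.cons_append, chn, ← ENNReal.tsum_mul_left]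
    refine ENNReal.tsum_le_tsum fun n => ?_
    split_ifs with hn
    · refine (mul_le_mul' (pow_inv_le n k 1 (by omega) (hl k (by simp))) (h n)).trans ?_
      have : gg n = 2 * (√(n : ℝ))⁻¹ := by rw [gg, if_neg (by omega)]
      rw [this, ENNReal.ofReal_mul (by norm_num), pow_one]
      apply le_of_eq
      simp only [ENNReal.ofReal_ofNat]
      ring
    · simp

theorem chn_fin (l : List ℕ) (c : ℕ) (hl : ∀ i ∈ l, 1 ≤ i) (hc : 2 ≤ c) :
    chn (l ++ [c]) 0 (fun n => ENNReal.ofReal (√(n : ℝ))) ≠ ⊤ := by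
  obtain ⟨K, hK, h⟩ := chn_bound l c hl hc
  exact ne_top_of_le_ne_top (ENNReal.mul_ne_top hK ENNReal.ofReal_ne_top) (h 0)

theorem ZZ_fin (l : List ℕ) (c : ℕ) (hl : ∀ i ∈ l, 1 ≤ i) (hc : 2 ≤ c) :
    ZZ (l ++ [c]) ≠ ⊤ := by
  refine ne_top_of_le_ne_top (chn_fin l c hl hc) ?_
  rw [ZZ, chn_append, chn_append]
  refine chn_mono _ _ _ _ fun x _ => ?_
  simp only [chn]
  refine ENNReal.tsum_le_tsum fun n => ?_
  split_ifs with hn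
  · gcongr
    rw [← ENNReal.ofReal_one]
    apply ENNReal.ofReal_le_ofReal
    rw [Real.one_le_sqrt]
    exact_mod_cast (by omega : 1 ≤ n)
  · exact le_rfl

theorem dif_sum_le (x n : ℕ) (h : x ≤ n) : ∑ p ∈ Finset.range x, dif p n ≤ 2 * ENNReal.ofReal (√(n : ℝ)) := by
  have hr : ∀ x, x ≤ n → ∑ p ∈ Finset.range x, ((n : ℝ) - p)⁻¹ ≤ 2 * √(n : ℝ) - 2 * √((n : ℝ) - x) := by
    intro x
    induction x with
    | zero => intro; simp
    | succ x ih =>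
      intro hx
      rw [Finset.sum_range_succ]
      have h1 := ih (by omega)
      have hy : (1 : ℝ) ≤ (n : ℝ) - x := by
        have : ((x + 1 : ℕ) : ℝ) ≤ n := by exact_mod_cast hx
        push_cast at this
        linarith
      push_cast
      rw [show (n : ℝ) - (x + 1) = (n : ℝ) - x - 1 by ring]
      set y := (n : ℝ) - x
      have e1 : √y ^ 2 = y := Real.sq_sqrt (by linarith)
      have e2 : √(y - 1) ^ 2 = y - 1 := Real.sq_sqrt (by linarith)
      have e3 : 1 ≤ √y := by rw [Real.one_le_sqrt]; exact hy
      have e4 : 0 ≤ √(y - 1) := Real.sqrt_nonneg _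
      have e5 : √(y - 1) ≤ √y := Real.sqrt_le_sqrt (by linarith)
      have e6 : y⁻¹ ≤ 2 * (√y - √(y - 1)) := by
        rw [inv_le_iff_one_le_mul₀ (by linarith)]
        have : (√y - √(y - 1)) * (√y + √(y - 1)) = 1 := by nlinarith
        have h7 : √y + √(y - 1) ≤ 2 * y := by nlinarith
        nlinarith
      linarith
  have e : ∑ p ∈ Finset.range x, dif p n = ENNReal.ofReal (∑ p ∈ Finset.range x, ((n : ℝ) - p)⁻¹) := by
    rw [ENNReal.ofReal_sum_of_nonneg]
    · refine Finset.sum_congr rfl fun p hp => ?_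
      rw [dif_ofReal]
      have := Finset.mem_range.1 hp
      omega
    · intro p hp
      have := Finset.mem_range.1 hp
      have : (p : ℝ) < n := by exact_mod_cast (by omega : p < n)
      have : (0 : ℝ) < n - p := by linarith
      positivity
  rw [e, show (2 : ENNReal) = ENNReal.ofReal 2 by simp, ← ENNReal.ofReal_mul (by norm_num)]
  apply ENNReal.ofReal_le_ofReal
  have := hr x h
  have := Real.sqrt_nonneg ((n : ℝ) - x)
  linarith

theorem TT_fin (l : List ℕ) (c : ℕ) (hl : ∀ i ∈ l, 1 ≤ i) (hc : 2 ≤ c) :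
    TT (l ++ [c]) ≠ ⊤ := by
  have h := ENNReal.mul_ne_top (ENNReal.ofNat_ne_top (n := 2)) (chn_fin l c hl hc)
  refine ne_top_of_le_ne_top h ?_
  rw [← chn_mul]
  obtain ⟨d, w, hw⟩ : ∃ d w, l ++ [c] = d :: w := by
    cases l with
    | nil => exact ⟨_, _, rfl⟩
    | cons d l => exact ⟨_, _, rfl⟩
  rw [hw, TT_cons, chn]
  refine ENNReal.tsum_le_tsum fun n => ?_
  split_ifs with hn
  · gcongr
    exact chn_mono _ _ _ _ fun x hx => dif_sum_le _ _ hx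
  · exact le_rfl

theorem cons_iff (b : ℕ) (m a : ℕ) (t : Fin b → ℕ) :
    ((∀ i, m < (Fin.cons a t : Fin (b + 1) → ℕ) i) ∧ StrictMono (Fin.cons a t : Fin (b + 1) → ℕ)) ↔
      m < a ∧ ((∀ i, a < t i) ∧ StrictMono t) := by
  constructor
  · rintro ⟨h1, h2⟩
    refine ⟨h1 0, fun i => ?_, fun i j hij => ?_⟩
    · simpa using h2 (Fin.succ_pos i)
    · simpa using h2 (Fin.succ_lt_succ_iff.2 hij)
  · rintro ⟨h1, h2, h3⟩
    refine ⟨fun i => ?_, fun i j hij => ?_⟩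
    · refine Fin.cases ?_ (fun i => ?_) i
      · simpa using h1
      · simpa using h1.trans (h2 i)
    · revert hij
      refine Fin.cases ?_ (fun i => ?_) i <;> refine Fin.cases ?_ (fun j => ?_) j
      · simp
      · intro _; simpa using h2 j
      · intro h; exact absurd h (by simp)
      · intro h; simpa using h3 (Fin.succ_lt_succ_iff.1 h)

theorem chn_eq_tsum (k : List ℕ) : ∀ m, chn k m (fun _ => 1) =
    ∑' n : Fin k.length → ℕ, if (∀ i, m < n i) ∧ StrictMono n then
      ∏ i, ((n i : ENNReal) ^ k.get i)⁻¹ else 0 := by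
  induction k with
  | nil =>
    intro m
    have : ∀ f : (Fin ([] : List ℕ).length → ℕ) → ENNReal, ∑' n, f n = f (fun i => 0) := by
      intro f
      have : IsEmpty (Fin ([] : List ℕ).length) := inferInstanceAs (IsEmpty (Fin 0))
      rw [tsum_eq_single (fun i => 0)]
      intro b hb
      exact absurd (Subsingleton.elim _ _) hb
    rw [this, if_pos]
    · simp [chn]
    · exact ⟨fun i => i.elim0, fun i => i.elim0⟩
  | cons k l ih =>
    intro m
    rw [chn]
    simp only [ih]
    have e := (Fin.consEquiv (fun _ : Fin (l.length + 1) => ℕ)).tsum_eq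
      (fun n : Fin (l.length + 1) → ℕ => if (∀ i, m < n i) ∧ StrictMono n then
      ∏ i, ((n i : ENNReal) ^ (k :: l).get i)⁻¹ else 0)
    refine Eq.trans ?_ e
    rw [ENNReal.tsum_prod']
    refine tsum_congr fun a => ?_
    simp only [Fin.consEquiv, Equiv.coe_fn_mk, cons_iff]
    split_ifs with h
    · rw [← ENNReal.tsum_mul_left]
      refine tsum_congr fun t => ?_
      simp only [h, true_and]
      split_ifs with h'
      · rw [Fin.prod_univ_succ]
        simp
      · simp
    · simp [h]

theorem mzv_eq (k : List ℕ) : mzv k = (ZZ k).toReal := by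
  rw [ZZ, chn_eq_tsum, ENNReal.tsum_toReal_eq]
  · rw [mzv]
    refine tsum_congr fun n => ?_
    simp only [Set.indicator, Set.mem_ofPred_eq]
    split_ifs with h
    · simp [ENNReal.toReal_prod]
    · simp
  · intro n
    split_ifs with h
    · refine ENNReal.prod_ne_top fun i _ => ?_
      rw [Ne, ENNReal.inv_eq_top]
      have := h.1 i
      simp; omega
    · simp

def ZS (w : List ℕ) : ENNReal := ∑ j ∈ Finset.range (w.getLast! - 1),
  ZZ ((j + 1) :: (w.dropLast ++ [w.getLast! - j]))

theorem upLast_concat (l : List ℕ) (c : ℕ) : upLast (l ++ [c]) = l ++ [c + 1] := by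
  cases l with
  | nil => rfl
  | cons a l =>
    have e : upLast (a :: l ++ [c]) = (a :: l ++ [c]).dropLast ++ [(a :: l ++ [c]).getLast! + 1] := rfl
    rw [e, List.dropLast_concat, List.getLast!_eq_getLast?_getD, List.getLast?_concat]
    rfl

theorem getLast!_concat' (l : List ℕ) (c : ℕ) : (l ++ [c]).getLast! = c := by
  simp [List.getLast!_eq_getLast?_getD]

theorem step_rot (r : List ℕ) (hr : r ≠ []) (h1 : ∀ i ∈ r, 1 ≤ i) :
    TT (r.rotate 1) + ZS (r.rotate 1) = TT r + ZZ (upLast (r.rotate 1)) := by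
  cases r with
  | nil => exact absurd rfl hr
  | cons c l =>
    have e : (c :: l).rotate 1 = l ++ [c] := by simp
    rw [e, upLast_concat, ZS, getLast!_concat', List.dropLast_concat]
    exact main_step l c (h1 c (by simp))

theorem ZS_terms_fin (w : List ℕ) (h1 : ∀ i ∈ w, 1 ≤ i) :
    ∀ j ∈ Finset.range (w.getLast! - 1),
      ZZ ((j + 1) :: (w.dropLast ++ [w.getLast! - j])) ≠ ⊤ := by
  intro j hj
  have := Finset.mem_range.1 hj
  rw [← List.cons_append]
  refine ZZ_fin _ _ ?_ (by omega)
  intro i hi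
  rcases List.mem_cons.1 hi with rfl | hi
  · omega
  · exact h1 i (List.mem_of_mem_dropLast hi)

theorem ZS_fin (w : List ℕ) (h1 : ∀ i ∈ w, 1 ≤ i) : ZS w ≠ ⊤ :=
  ENNReal.sum_ne_top.2 (ZS_terms_fin w h1)

theorem up_fin (w : List ℕ) (hw : w ≠ []) (h1 : ∀ i ∈ w, 1 ≤ i) : ZZ (upLast w) ≠ ⊤ := by
  obtain ⟨l, c, rfl⟩ : ∃ l c, w = l ++ [c] := ⟨_, _, (List.dropLast_append_getLast hw).symm⟩
  rw [upLast_concat]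
  have := h1 c (by simp)
  exact ZZ_fin _ _ (fun i hi => h1 i (by simp [hi])) (by omega)

theorem TT_rot_fin (k : List ℕ) (hk : k ≠ [])
    (hk1 : ∀ i ∈ k, 1 ≤ i) (hk2 : ∃ i ∈ k, 2 ≤ i) (s : ℕ) : TT (k.rotate s) ≠ ⊤ := by
  have back : ∀ s, TT (k.rotate (s + 1)) ≠ ⊤ → TT (k.rotate s) ≠ ⊤ := by
    intro s h
    have e := step_rot (k.rotate s) (by simpa using hk) (by simpa using hk1)
    rw [List.rotate_rotate] at e
    have h2 : TT (k.rotate (s + 1)) + ZS (k.rotate (s + 1)) ≠ ⊤ :=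
      ENNReal.add_ne_top.2 ⟨h, ZS_fin _ (by simpa using hk1)⟩
    rw [e] at h2
    exact (ENNReal.add_ne_top.1 h2).1
  have back' : ∀ d s, TT (k.rotate (s + d)) ≠ ⊤ → TT (k.rotate s) ≠ ⊤ := by
    intro d
    induction d with
    | zero => intro s h; exact h
    | succ d ih => intro s h; exact ih s (back _ h)
  obtain ⟨c, hc, hc2⟩ := hk2
  obtain ⟨u, v, rfl⟩ := List.append_of_mem hc
  set L := (u ++ c :: v).length with hL
  have hL0 : 1 ≤ L := by simp [hL]; omega
  obtain ⟨d, hd⟩ : ∃ d, s + d = u.length + 1 + L * s :=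
    ⟨u.length + 1 + L * s - s, Nat.add_sub_of_le
      ((Nat.le_mul_of_pos_left s hL0).trans (Nat.le_add_left _ _))⟩
  apply back' d s
  have e : (u ++ c :: v).rotate (s + d) = (v ++ u) ++ [c] := by
    rw [hd, ← List.rotate_mod, ← hL, Nat.add_mul_mod_self_left, hL, List.rotate_mod]
    have : u ++ c :: v = (u ++ [c]) ++ v := by simp
    rw [this]
    have h2 : u.length + 1 = (u ++ [c]).length := by simp
    rw [h2, List.rotate_append_length_eq]
    simp
  rw [e]
  refine TT_fin _ _ (fun i hi => hk1 i ?_) hc2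
  rcases List.mem_append.1 hi with h | h <;> simp [h]

theorem sum_rot (k : List ℕ) (F : List ℕ → ENNReal) :
    ∑ s ∈ Finset.range k.length, F (k.rotate (s + 1)) = ∑ s ∈ Finset.range k.length, F (k.rotate s) := by
  cases h : k.length with
  | zero => rfl
  | succ n =>
    rw [Finset.sum_range_succ, Finset.sum_range_succ']
    congr 1
    rw [← h, List.rotate_length, List.rotate_zero]

/-- **Cyclic sum formula.**  For a nonempty index `k = (k₁,…,kₐ)` with some entry `≥ 2`,
summing over all cyclic shifts `σᵗk = (k_{t+1},…,kₐ,k₁,…,k_t)`: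
`Σ_t ζ((σᵗk)_↑) = Σ_t Σ_{j=0}^{(σᵗk)ₐ - 2} ζ(j+1, (σᵗk)₁, …, (σᵗk)_{a-1}, (σᵗk)ₐ - j)`. -/
theorem cyclic_sum_formula (k : List ℕ) (hk : k ≠ [])
    (hk1 : ∀ i ∈ k, 1 ≤ i) (hk2 : ∃ i ∈ k, 2 ≤ i) :
    ∑ t ∈ Finset.range k.length, mzv (upLast (k.rotate t)) =
      ∑ t ∈ Finset.range k.length, ∑ j ∈ Finset.range ((k.rotate t).getLast! - 1),
        mzv ((j + 1) :: ((k.rotate t).dropLast ++ [(k.rotate t).getLast! - j])) := by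
  have main : ∑ t ∈ Finset.range k.length, ZZ (upLast (k.rotate t)) =
      ∑ t ∈ Finset.range k.length, ZS (k.rotate t) := by
    have h : ∑ s ∈ Finset.range k.length, (TT (k.rotate (s + 1)) + ZS (k.rotate (s + 1)))
        = ∑ s ∈ Finset.range k.length, (TT (k.rotate s) + ZZ (upLast (k.rotate (s + 1)))) := by
      refine Finset.sum_congr rfl fun s _ => ?_
      have e := step_rot (k.rotate s) (by simpa using hk) (by simpa using hk1)
      rwa [List.rotate_rotate] at e
    rw [Finset.sum_add_distrib, Finset.sum_add_distrib, sum_rot k TT, sum_rot k ZS,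
      sum_rot k (fun w => ZZ (upLast w))] at h
    exact ((ENNReal.add_right_inj (ENNReal.sum_ne_top.2
      fun s _ => TT_rot_fin k hk hk1 hk2 s)).1 h).symm
  have h := congrArg ENNReal.toReal main
  rw [ENNReal.toReal_sum fun t _ => up_fin _ (by simpa using hk) (by simpa using hk1),
    ENNReal.toReal_sum fun t _ => ZS_fin _ (by simpa using hk1)] at h
  simp only [mzv_eq]
  rw [h]
  refine Finset.sum_congr rfl fun t _ => ?_
  rw [ZS, ENNReal.toReal_sum (ZS_terms_fin _ (by simpa using hk1))]
end
end

section
/- Cyclic sum formula for finite multiple zeta values: let p be a prime and k=(k_1,…,k_a) a nonempty index. For 0≤t≤a−1 write σ^t k = (k_{t+1},…,k_a,k_1,…,k_t). Then, in ℤ/pℤ, Σ_{t=0}^{a−1} [ ζ^{(p)}((σ^t k)_↑) + ζ^{(p)}(↑(σ^t k)) + ζ^{(p)}(←(σ^t k)) ] = Σ_{t=0}^{a−1} Σ_{j=0}^{(σ^t k)_a − 2} ζ^{(p)}( j+1, (σ^t k)_1, …, (σ^t k)_{a−1}, (σ^t k)_a − j ), where inner sums with (σ^t k)_a = 1 are empty.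 -/
open scoped Classical

noncomputable section

/-- The finite multiple harmonic sum `ζ^{(p)}(k) = Σ_{0 < n₁ < ⋯ < n_d ≤ p-1} ∏ nᵢ^(-kᵢ)`
computed in `ZMod p` (the `nᵢ` range over nonzero residues). -/
def zetaP (p : ℕ) (k : List ℕ) : ZMod p :=
  ∑ n ∈ Finset.univ.filter
      (fun n : Fin k.length → Fin p => (∀ i, 0 < (n i : ℕ)) ∧ StrictMono n),
    ∏ i, (((n i : ℕ) : ZMod p)⁻¹) ^ k.get i

/-- `↑k`: increase the first entry of an index by `1` (`↑∅ = ∅`). -/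
def upFirst : List ℕ → List ℕ
  | [] => []
  | a :: k => (a + 1) :: k

/-- Nested sum over chains `lo < n₁ < ⋯ < n_d < p`, with `φ` applied to the last entry. -/
def chainS (p : ℕ) : List ℕ → ℕ → (ℕ → ZMod p) → ZMod p
  | [], lo, φ => φ lo
  | k :: l, lo, φ => ∑ n ∈ Finset.Ioo lo p, ((n : ZMod p)⁻¹) ^ k * chainS p l n φ

lemma chainS_append (p : ℕ) (l : List ℕ) (x : ℕ) (lo : ℕ) (φ : ℕ → ZMod p) :
    chainS p (l ++ [x]) lo φ =
      chainS p l lo (fun m => ∑ n ∈ Finset.Ioo m p, ((n : ZMod p)⁻¹) ^ x * φ n) := by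
  induction l generalizing lo with
  | nil => rfl
  | cons a l ih => simp only [List.cons_append, chainS, ih]

lemma chainS_congr (p : ℕ) (l : List ℕ) (lo : ℕ) (hlo : lo < p) (φ ψ : ℕ → ZMod p)
    (h : ∀ m, lo ≤ m → m < p → φ m = ψ m) : chainS p l lo φ = chainS p l lo ψ := by
  induction l generalizing lo with
  | nil => exact h lo le_rfl hlo
  | cons a l ih =>
    simp only [chainS]
    refine Finset.sum_congr rfl fun n hn => ?_
    rw [Finset.mem_Ioo] at hn
    rw [ih n hn.2 fun m hm hm2 => h m (by omega) hm2]

lemma chainS_add (p : ℕ) (l : List ℕ) (lo : ℕ) (φ ψ : ℕ → ZMod p) :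
    chainS p l lo (fun m => φ m + ψ m) = chainS p l lo φ + chainS p l lo ψ := by
  induction l generalizing lo with
  | nil => rfl
  | cons a l ih => simp only [chainS, ih, mul_add, Finset.sum_add_distrib]

lemma chainS_mul (p : ℕ) (l : List ℕ) (lo : ℕ) (c : ZMod p) (φ : ℕ → ZMod p) :
    chainS p l lo (fun m => c * φ m) = c * chainS p l lo φ := by
  induction l generalizing lo with
  | nil => rfl
  | cons a l ih => simp only [chainS, ih, Finset.mul_sum, mul_left_comm]

lemma chainS_sum (p : ℕ) (l : List ℕ) (lo : ℕ) (s : Finset ℕ) (φ : ℕ → ℕ → ZMod p) :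
    chainS p l lo (fun m => ∑ j ∈ s, φ j m) = ∑ j ∈ s, chainS p l lo (φ j) := by
  induction l generalizing lo with
  | nil => rfl
  | cons a l ih =>
    simp only [chainS, ih, Finset.mul_sum]
    exact Finset.sum_comm

lemma chainS_const (p : ℕ) (l : List ℕ) (lo : ℕ) (c : ZMod p) :
    chainS p l lo (fun _ => c) = c * chainS p l lo (fun _ => 1) := by
  rw [← chainS_mul]; simp

/-- The tuple sum with lower bound equals the nested sum. -/
lemma tuple_eq_chainS (p : ℕ) (k : List ℕ) (lo : ℕ) :
    (∑ n ∈ Finset.univ.filter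
      (fun n : Fin k.length → Fin p => (∀ i, lo < (n i : ℕ)) ∧ StrictMono n),
    ∏ i, (((n i : ℕ) : ZMod p)⁻¹) ^ k.get i) = chainS p k lo (fun _ => 1) := by
  induction k generalizing lo with
  | nil =>
    rw [Finset.filter_true_of_mem]
    · simp [chainS]
    · intro n _
      exact ⟨fun i => i.elim0, fun i => i.elim0⟩
  | cons a l ih =>
    simp only [chainS, ← ih]
    have hI : ∀ f : ℕ → ZMod p, ∑ n ∈ Finset.Ioo lo p, f n =
        ∑ n : Fin p, if lo < (n : ℕ) then f n else 0 := by
      intro f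
      rw [Fin.sum_univ_eq_sum_range (fun n => if lo < n then f n else 0) p,
        ← Finset.sum_filter]
      refine Finset.sum_congr ?_ fun _ _ => rfl
      ext n; simp [and_comm]
    rw [hI, Finset.sum_filter]
    have e := (Fin.consEquiv (n := l.length) (fun _ => Fin p)).sum_comp
      (fun n : Fin (l.length + 1) → Fin p =>
        if (∀ i, lo < (n i : ℕ)) ∧ StrictMono n then
          ∏ i, (((n i : ℕ) : ZMod p)⁻¹) ^ (a :: l).get i else 0)
    refine e.symm.trans ?_
    rw [Fintype.sum_prod_type]
    refine Finset.sum_congr rfl fun x _ => ?_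
    have hc : ∀ y : Fin l.length → Fin p,
        ((∀ i, lo < ((Fin.cons x y : Fin (l.length + 1) → Fin p) i : ℕ)) ∧
          StrictMono (Fin.cons x y : Fin (l.length + 1) → Fin p)) ↔
        (lo < (x : ℕ) ∧ (∀ i, (x : ℕ) < (y i : ℕ)) ∧ StrictMono y) := by
      intro y
      constructor
      · rintro ⟨h1, h2⟩
        refine ⟨h1 0, fun i => ?_, fun i j hij => ?_⟩
        · exact h2 (Fin.succ_pos i)
        · exact h2 (Fin.succ_lt_succ_iff.2 hij)
      · rintro ⟨h1, h2, h3⟩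
        refine ⟨fun i => ?_, fun i j hij => ?_⟩
        · refine Fin.cases ?_ (fun i => ?_) i
          · exact h1
          · exact h1.trans (h2 i)
        · induction j using Fin.cases with
          | zero => exact absurd hij (Fin.not_lt_zero i)
          | succ j =>
            induction i using Fin.cases with
            | zero => exact h2 j
            | succ i => exact h3 (Fin.succ_lt_succ_iff.1 hij)
    simp only [Fin.consEquiv, Equiv.coe_fn_mk, hc]
    by_cases hx : lo < (x : ℕ)
    · simp only [hx, true_and, if_true, Finset.mul_sum]
      rw [← Finset.sum_filter]
      refine Finset.sum_congr rfl fun y _ => ?_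
      exact Fin.prod_univ_succ (n := l.length) _
    · simp [hx]

lemma zetaP_eq (p : ℕ) (k : List ℕ) : zetaP p k = chainS p k 0 (fun _ => 1) :=
  tuple_eq_chainS p k 0

/-- The sum with the connector `1/(n_a - n_0)`. -/
def cycA (p : ℕ) (k : List ℕ) : ZMod p :=
  ∑ n ∈ Finset.Ioo 0 p, chainS p k n (fun m => ((m : ZMod p) - n)⁻¹)

/-- The auxiliary sum for `x :: l`. -/
def cycB (p : ℕ) (x : ℕ) (l : List ℕ) : ZMod p :=
  ∑ n ∈ Finset.Ioo 0 p, ((n : ZMod p)⁻¹) ^ x *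
    chainS p l n (fun m => ∑ q ∈ Finset.Ioo m p, (((q : ZMod p) - n)⁻¹ - (q : ZMod p)⁻¹))

lemma partial_frac {F : Type*} [Field F] (n q : F) (hn : n ≠ 0) (hq : q ≠ 0) (hqn : q - n ≠ 0)
    (x : ℕ) :
    (q⁻¹) ^ (x + 1) * (q - n)⁻¹ = (n⁻¹) ^ (x + 1) * ((q - n)⁻¹ - q⁻¹) +
      ∑ j ∈ Finset.range x, (-(n⁻¹) ^ (j + 1)) * (q⁻¹) ^ (x + 1 - j) := by
  induction x with
  | zero => simp; field_simp; ring
  | succ x ih =>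
    rw [Finset.sum_range_succ']
    have h : ∀ j ∈ Finset.range x, (-(n⁻¹) ^ (j + 1 + 1)) * (q⁻¹) ^ (x + 1 + 1 - (j + 1)) =
        n⁻¹ * ((-(n⁻¹) ^ (j + 1)) * (q⁻¹) ^ (x + 1 - j)) := by
      intro j _
      rw [Nat.add_sub_add_right]; ring
    rw [Finset.sum_congr rfl h, ← Finset.mul_sum]
    have h2 := eq_sub_of_add_eq' ih.symm
    rw [h2]
    simp only [Nat.sub_zero, pow_succ]
    field_simp
    ring

lemma cast_ne (p : ℕ) {n : ℕ} (h0 : 0 < n) (h : n < p) : (n : ZMod p) ≠ 0 := by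
  rw [Ne, ZMod.natCast_eq_zero_iff]
  exact Nat.not_dvd_of_pos_of_lt h0 h

lemma cast_sub_ne (p : ℕ) {n q : ℕ} (h0 : n < q) (h : q < p) : (q : ZMod p) - n ≠ 0 := by
  rw [← Nat.cast_sub h0.le]
  exact cast_ne p (by omega) (by omega)

lemma cycA_append (p : ℕ) [Fact p.Prime] (l : List ℕ) (x : ℕ) (hx : 1 ≤ x) :
    cycA p (l ++ [x]) + ∑ j ∈ Finset.range (x - 1), zetaP p ((j + 1) :: (l ++ [x - j])) =
      cycB p x l := by
  obtain ⟨x, rfl⟩ : ∃ y, x = y + 1 := ⟨x - 1, by omega⟩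
  simp only [cycA, cycB, zetaP_eq, chainS, Nat.add_sub_cancel]
  rw [Finset.sum_comm, ← Finset.sum_add_distrib]
  refine Finset.sum_congr rfl fun n hn => ?_
  rw [Finset.mem_Ioo] at hn
  simp only [chainS_append]
  have key : chainS p l n (fun m => ∑ q ∈ Finset.Ioo m p,
        ((q : ZMod p)⁻¹) ^ (x + 1) * ((q : ZMod p) - n)⁻¹) =
      chainS p l n (fun m => ((n : ZMod p)⁻¹) ^ (x + 1) *
        (∑ q ∈ Finset.Ioo m p, (((q : ZMod p) - n)⁻¹ - (q : ZMod p)⁻¹)) +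
        ∑ j ∈ Finset.range x, (-((n : ZMod p)⁻¹) ^ (j + 1)) *
          ∑ q ∈ Finset.Ioo m p, ((q : ZMod p)⁻¹) ^ (x + 1 - j) * 1) := by
    refine chainS_congr p l n hn.2 _ _ fun m hm hmp => ?_
    simp only [Finset.mul_sum, mul_one]
    rw [Finset.sum_comm, ← Finset.sum_add_distrib]
    refine Finset.sum_congr rfl fun q hq => ?_
    rw [Finset.mem_Ioo] at hq
    exact partial_frac _ _ (cast_ne p hn.1 hn.2) (cast_ne p (by omega) hq.2)
      (cast_sub_ne p (by omega) hq.2) x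
  rw [key, chainS_add, chainS_mul, chainS_sum, add_assoc, ← Finset.sum_add_distrib]
  simp only [chainS_mul]
  simp

lemma harm (p : ℕ) [Fact p.Prime] (n d : ℕ) : ∀ m : ℕ, n + 1 ≤ m → m + 1 + d = p →
    ∑ q ∈ Finset.Ioo m p, (((q : ZMod p) - (n + 1 : ℕ))⁻¹ - (q : ZMod p)⁻¹) =
      (∑ i ∈ Finset.Ioo 0 (n + 1), ((m : ZMod p) - i)⁻¹) +
      ((∑ i ∈ Finset.Ioo 0 (n + 1), (i : ZMod p)⁻¹) + ((n + 1 : ℕ) : ZMod p)⁻¹ + (m : ZMod p)⁻¹) := by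
  have hI : ∀ f : ℕ → ZMod p, ∑ i ∈ Finset.Ioo 0 (n + 1), f i = ∑ i ∈ Finset.range n, f (i + 1) := by
    intro f
    rw [Finset.range_eq_Ico, Finset.sum_Ico_add' f 0 n 1]
    rfl
  simp only [hI]
  induction d with
  | zero =>
    intro m hm hp
    have h0 : Finset.Ioo m p = ∅ := by ext; simp; omega
    have hm1 : (m : ZMod p) = -1 := by
      have : ((m + 1 : ℕ) : ZMod p) = 0 := by
        rw [show m + 1 = p by omega]; simp
      push_cast at this
      linear_combination this
    rw [h0, hm1, Finset.sum_empty]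
    have h1 : ∀ i ∈ Finset.range n, ((-1 : ZMod p) - ((i + 1 : ℕ) : ZMod p))⁻¹ =
        -(((i + 1 + 1 : ℕ) : ZMod p)⁻¹) := by
      intro i _
      rw [← inv_neg]; congr 1; push_cast; ring
    rw [Finset.sum_congr rfl h1, Finset.sum_neg_distrib]
    have h2 := Finset.sum_range_succ (fun i : ℕ => ((i + 1 : ℕ) : ZMod p)⁻¹) n
    rw [Finset.sum_range_succ'] at h2
    have h3 : ((-1 : ZMod p))⁻¹ = -1 := by rw [inv_neg, inv_one]
    rw [h3]
    simp only [zero_add, Nat.cast_one, inv_one] at h2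
    linear_combination h2
  | succ d ih =>
    intro m hm hp
    have hs : Finset.Ioo m p = insert (m + 1) (Finset.Ioo (m + 1) p) := by
      ext; simp; omega
    rw [hs, Finset.sum_insert (by simp), ih (m + 1) (by omega) (by omega)]
    have ht := Finset.sum_range_sub (fun i : ℕ => ((m : ZMod p) - i)⁻¹) n
    rw [Finset.sum_sub_distrib] at ht
    have h1 : ∀ i ∈ Finset.range n, ((((m + 1 : ℕ) : ZMod p)) - ((i + 1 : ℕ) : ZMod p))⁻¹ =
        ((m : ZMod p) - i)⁻¹ := by
      intro i _
      congr 1; push_cast; ring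
    rw [Finset.sum_congr rfl h1]
    have h2 : (((m + 1 : ℕ) : ZMod p)) - ((n + 1 : ℕ) : ZMod p) = (m : ZMod p) - n := by
      push_cast; ring
    rw [h2]
    simp only [Nat.cast_zero, sub_zero] at ht
    linear_combination -ht

lemma upLast_append (l : List ℕ) (x : ℕ) : upLast (l ++ [x]) = l ++ [x + 1] := by
  have : l ++ [x] ≠ [] := by simp
  unfold upLast
  split
  · simp_all
  · simp [List.getLast!_eq_getLast?_getD]

lemma zetaP_upLast (p : ℕ) (l : List ℕ) (hl : l ≠ []) :
    zetaP p (upLast l) = chainS p l 0 (fun m => (m : ZMod p)⁻¹) := by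
  obtain ⟨i, x, rfl⟩ : ∃ i x, l = i ++ [x] :=
    ⟨l.dropLast, l.getLast hl, (List.dropLast_append_getLast hl).symm⟩
  rw [upLast_append, zetaP_eq, chainS_append, chainS_append]
  simp only [mul_one, pow_succ]

lemma swap_sum (p : ℕ) (f : ℕ → ℕ → ZMod p) :
    ∑ i ∈ Finset.Ioo 0 p, ∑ n ∈ Finset.Ioo i p, f i n =
      ∑ n ∈ Finset.Ioo 0 p, ∑ i ∈ Finset.Ioo 0 n, f i n := by
  refine Finset.sum_comm' fun i n => ?_
  simp only [Finset.mem_Ioo]; omega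

lemma cycB_eq (p : ℕ) [Fact p.Prime] (x : ℕ) (l : List ℕ) :
    cycB p x l = cycA p (x :: l) + (zetaP p (upLast (x :: l)) + zetaP p (upFirst (x :: l)) +
          zetaP p (1 :: x :: l)) := by
  rw [zetaP_upLast p _ (by simp)]
  simp only [cycA, cycB, zetaP_eq, upFirst, chainS, pow_one, Finset.mul_sum]
  rw [swap_sum, swap_sum]
  simp only [← Finset.sum_add_distrib]
  refine Finset.sum_congr rfl fun n hn => ?_
  rw [Finset.mem_Ioo] at hn
  obtain ⟨n, rfl⟩ : ∃ y, n = y + 1 := ⟨n - 1, by omega⟩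
  rw [chainS_congr p l (n + 1) hn.2 _ _ fun m hm hmp =>
    harm p n (p - (m + 1)) m hm (by omega)]
  rw [chainS_add, chainS_add, chainS_add, chainS_sum, chainS_const p l _ (∑ i ∈ _, _),
    chainS_const p l _ ((n + 1 : ℕ) : ZMod p)⁻¹]
  rw [← Finset.mul_sum, ← Finset.sum_mul]
  ring

lemma sum_rotate {M : Type*} [AddCommGroup M] (k : List ℕ) (f : List ℕ → M) :
    ∑ t ∈ Finset.range k.length, f (k.rotate (t + 1)) =
      ∑ t ∈ Finset.range k.length, f (k.rotate t) := by
  have h1 := Finset.sum_range_succ (fun t => f (k.rotate t)) k.length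
  have h2 := Finset.sum_range_succ' (fun t => f (k.rotate t)) k.length
  rw [h1] at h2
  simp only [List.rotate_length, List.rotate_zero] at h2
  exact (add_right_cancel h2).symm

/-- **Cyclic sum formula for finite multiple zeta values.**
For a prime `p` and a nonempty index `k`, summing over all cyclic shifts
`σᵗk = (k_{t+1},…,kₐ,k₁,…,k_t)`, in `ℤ/pℤ`:
`Σ_t [ζ^{(p)}((σᵗk)_↑) + ζ^{(p)}(↑(σᵗk)) + ζ^{(p)}(←(σᵗk))]
  = Σ_t Σ_{j=0}^{(σᵗk)ₐ - 2} ζ^{(p)}(j+1, (σᵗk)₁, …, (σᵗk)_{a-1}, (σᵗk)ₐ - j)`. -/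
theorem cyclic_sum_formula_fmzv (p : ℕ) (hp : p.Prime) (k : List ℕ)
    (hk : k ≠ []) (hk1 : ∀ i ∈ k, 1 ≤ i) :
    ∑ t ∈ Finset.range k.length,
        (zetaP p (upLast (k.rotate t)) + zetaP p (upFirst (k.rotate t)) +
          zetaP p (1 :: k.rotate t)) =
      ∑ t ∈ Finset.range k.length, ∑ j ∈ Finset.range ((k.rotate t).getLast! - 1),
        zetaP p ((j + 1) :: ((k.rotate t).dropLast ++ [(k.rotate t).getLast! - j])) := by
  haveI := Fact.mk hp
  rw [← sum_rotate k (fun r => ∑ j ∈ Finset.range (r.getLast! - 1),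
        zetaP p ((j + 1) :: (r.dropLast ++ [r.getLast! - j])))]
  have hA := sum_rotate k (cycA p)
  rw [← add_right_inj (∑ t ∈ Finset.range k.length, cycA p (k.rotate t))]
  nth_rewrite 2 [← hA]
  rw [← Finset.sum_add_distrib, ← Finset.sum_add_distrib]
  refine Finset.sum_congr rfl fun t _ => ?_
  rw [← List.rotate_rotate]
  have hr : ∀ i ∈ k.rotate t, 1 ≤ i := fun i hi => hk1 i (List.mem_rotate.1 hi)
  have hne : k.rotate t ≠ [] := by simpa using hk
  generalize k.rotate t = r at hr hne
  cases r with
  | nil => exact absurd rfl hne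
  | cons x l =>
    have hx : 1 ≤ x := hr x (by simp)
    rw [← cycB_eq, ← cycA_append p l x hx]
    simp [List.getLast!_eq_getLast?_getD]
end
end
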